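/- Suppose every observation in 𝒪 is affine. For any type τ, suppose ⟨⟨a⟩⟩v and ⟨⟨a'⟩⟩v' are closed atom-binding values with atom(a,v,a',v') ⊆ w, ∅ ⊢ ⟨⟨a⟩⟩v : τ bnd and ∅ ⊢ ⟨⟨a'⟩⟩v' : τ bnd. Then for every atom a'' ∉ w, if ⊢_w ⟨⟨a⟩⟩v ≅ ⟨⟨a'⟩⟩v' : τ bnd then ⊢_{w∪{a''}} v[a:=a''] ≅ v'[a':=a''] : τ. -/

import Mathlib

/-!
Call two expressions indistinguishable at a state `s` (`EqAt`) if they co-terminate in `s` under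
every well-typed frame stack whose atoms lie in `s`. The theorem asks for indistinguishability of
`v[a := a'']` and `v'[a' := a'']` at every state `s₁ ++ a'' :: s₂` containing `w`, and rests on three
facts.

* Termination is invariant under finite permutations of atoms, and under adding or removing unused
  atoms at the left end of the state (`term_rel`). This is a step-by-step simulation which uses
  equivariance and affineness of the observations, and whose permutation grows as atoms are created.
* If `⟨⟨a⟩⟩v` and `⟨⟨a'⟩⟩v'` are indistinguishable at `s`, then `v[a := a'']` and `v'[a' := a'']` are
  so at `s ++ [a'']` (`EqAt.unbind`). Given a test stack `S`, the value is tested with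
  `let p = unbind x in let y = fst p in let z = snd p in S[z]`, where `y` replaces `a''` in `S`;
  which new atom is allocated does not matter, by equivariance.
* Indistinguishability at `c :: s` implies indistinguishability at `s ++ [c]` (`EqAt.rotate`): bind
  `c` on both sides and unbind it, which replaces `c` by a new rightmost atom; then drop the old,
  now unused, leftmost `c` by affineness, and swap the names.

Since `a'' ∉ w`, the state `s₂ ++ s₁` contains `w`, so the hypothesis gives indistinguishability of
the two atom-bindings there. Unbinding moves to `s₂ ++ s₁ ++ [a'']`, and rotating `s₂` past the rest
gives `s₁ ++ a'' :: s₂`.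

Substitution and weakening lemmas are stated for raw terms: the typing rule for `case` leaves the
branches of unrelated constructors unconstrained, so a typable closed term may contain stray
variables.
-/

set_option autoImplicit true

/-! ## Atoms and variables -/

abbrev Atom : Type := ℕ

/-! ## Types over a set of data type symbols -/

inductive Ty (D : Type) : Type where
  | unit : Ty D
  | prod : Ty D → Ty D → Ty D
  | arrow : Ty D → Ty D → Ty D
  | data : D → Ty D
  | atm : Ty D
  | bnd : Ty D → Ty D

/-! ## Signatures: data types, constructors and observations -/

structure Sig : Type 1 where
  D : Type
  C : Type
  O : Type
  [finD : Fintype D]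
  [finC : Fintype C]
  [finO : Fintype O]
  natD : D
  argTy : C → Ty D
  resTy : C → D
  zeroC : C
  succC : C
  zeroArg : argTy zeroC = Ty.unit
  zeroRes : resTy zeroC = natD
  succArg : argTy succC = Ty.data natD
  succRes : resTy succC = natD
  arity : O → ℕ
  obsVal : O → List Atom → List Atom → ℕ
  eqO : O
  eqArity : arity eqO = 2
  eqSem : ∀ (s : List Atom) (a b : Atom),
    obsVal eqO s [a, b] = if a = b then 0 else 1

attribute [instance] Sig.finD Sig.finC Sig.finO

/-! ## Terms (de Bruijn representation; values are a sub-grammar cut out by `IsVal`) -/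

inductive Tm (σ : Sig) : Type where
  | var : ℕ → Tm σ
  | unit : Tm σ
  | pair : Tm σ → Tm σ → Tm σ
  | fn : Tm σ → Tm σ          -- fun(f x = e); de Bruijn: var 0 = x, var 1 = f
  | con : σ.C → Tm σ → Tm σ
  | atom : Atom → Tm σ
  | bindv : Tm σ → Tm σ → Tm σ -- atom binding ⟨⟨v₁⟩⟩v₂
  | lett : Tm σ → Tm σ → Tm σ  -- let x = e₁ in e₂; binds var 0 in e₂
  | fst : Tm σ → Tm σ
  | snd : Tm σ → Tm σ
  | app : Tm σ → Tm σ → Tm σ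
  | case : Tm σ → (σ.C → Tm σ) → Tm σ -- match; each branch binds var 0
  | fresh : Tm σ
  | unbind : Tm σ → Tm σ
  | obs : (o : σ.O) → (Fin (σ.arity o) → Tm σ) → Tm σ

inductive IsVal {σ : Sig} : Tm σ → Prop where
  | var : IsVal (Tm.var n)
  | unit : IsVal Tm.unit
  | pair : IsVal v₁ → IsVal v₂ → IsVal (Tm.pair v₁ v₂)
  | fn : IsVal (Tm.fn e)
  | con : IsVal v → IsVal (Tm.con c v)
  | atom : IsVal (Tm.atom a)
  | bindv : IsVal v₁ → IsVal v₂ → IsVal (Tm.bindv v₁ v₂)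

/-! ## Renaming and substitution of variables -/

def upr (r : ℕ → ℕ) : ℕ → ℕ
  | 0 => 0
  | n + 1 => r n + 1

namespace Tm

variable {σ : Sig}

def renV : Tm σ → (ℕ → ℕ) → Tm σ
  | .var n, r => .var (r n)
  | .unit, _ => .unit
  | .pair t₁ t₂, r => .pair (renV t₁ r) (renV t₂ r)
  | .fn e, r => .fn (renV e (upr (upr r)))
  | .con c t, r => .con c (renV t r)
  | .atom a, _ => .atom a
  | .bindv t₁ t₂, r => .bindv (renV t₁ r) (renV t₂ r)
  | .lett e₁ e₂, r => .lett (renV e₁ r) (renV e₂ (upr r))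
  | .fst t, r => .fst (renV t r)
  | .snd t, r => .snd (renV t r)
  | .app t₁ t₂, r => .app (renV t₁ r) (renV t₂ r)
  | .case t br, r => .case (renV t r) (fun c => renV (br c) (upr r))
  | .fresh, _ => .fresh
  | .unbind t, r => .unbind (renV t r)
  | .obs o args, r => .obs o (fun i => renV (args i) r)

def ups (ρ : ℕ → Tm σ) : ℕ → Tm σ
  | 0 => .var 0
  | n + 1 => renV (ρ n) Nat.succ

def subst : Tm σ → (ℕ → Tm σ) → Tm σ
  | .var n, ρ => ρ n
  | .unit, _ => .unit
  | .pair t₁ t₂, ρ => .pair (subst t₁ ρ) (subst t₂ ρ)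
  | .fn e, ρ => .fn (subst e (ups (ups ρ)))
  | .con c t, ρ => .con c (subst t ρ)
  | .atom a, _ => .atom a
  | .bindv t₁ t₂, ρ => .bindv (subst t₁ ρ) (subst t₂ ρ)
  | .lett e₁ e₂, ρ => .lett (subst e₁ ρ) (subst e₂ (ups ρ))
  | .fst t, ρ => .fst (subst t ρ)
  | .snd t, ρ => .snd (subst t ρ)
  | .app t₁ t₂, ρ => .app (subst t₁ ρ) (subst t₂ ρ)
  | .case t br, ρ => .case (subst t ρ) (fun c => subst (br c) (ups ρ))
  | .fresh, _ => .fresh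
  | .unbind t, ρ => .unbind (subst t ρ)
  | .obs o args, ρ => .obs o (fun i => subst (args i) ρ)

/-- The substitution [v/x₀]. -/
def cons1 (v : Tm σ) : ℕ → Tm σ
  | 0 => v
  | n + 1 => .var n

/-- The substitution [v/x₀, f/x₁]. -/
def cons2 (v f : Tm σ) : ℕ → Tm σ
  | 0 => v
  | 1 => f
  | n + 2 => .var n

/-- e[v/x] (single capture-avoiding substitution for the last-bound variable). -/
def subst1 (e v : Tm σ) : Tm σ := subst e (cons1 v)

/-- e[v/x, f/f'] (used for function application). -/
def subst2 (e v f : Tm σ) : Tm σ := subst e (cons2 v f)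

/-! ## Atoms of a term, renaming/permuting atoms, observation symbols -/

def atoms : Tm σ → Finset Atom
  | .var _ => ∅
  | .unit => ∅
  | .pair t₁ t₂ => atoms t₁ ∪ atoms t₂
  | .fn e => atoms e
  | .con _ t => atoms t
  | .atom a => {a}
  | .bindv t₁ t₂ => atoms t₁ ∪ atoms t₂
  | .lett e₁ e₂ => atoms e₁ ∪ atoms e₂
  | .fst t => atoms t
  | .snd t => atoms t
  | .app t₁ t₂ => atoms t₁ ∪ atoms t₂
  | .case t br => atoms t ∪ Finset.univ.biUnion (fun c => atoms (br c))
  | .fresh => ∅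
  | .unbind t => atoms t
  | .obs _ args => Finset.univ.biUnion (fun i => atoms (args i))

def mapAtoms : Tm σ → (Atom → Atom) → Tm σ
  | .var n, _ => .var n
  | .unit, _ => .unit
  | .pair t₁ t₂, f => .pair (mapAtoms t₁ f) (mapAtoms t₂ f)
  | .fn e, f => .fn (mapAtoms e f)
  | .con c t, f => .con c (mapAtoms t f)
  | .atom a, f => .atom (f a)
  | .bindv t₁ t₂, f => .bindv (mapAtoms t₁ f) (mapAtoms t₂ f)
  | .lett e₁ e₂, f => .lett (mapAtoms e₁ f) (mapAtoms e₂ f)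
  | .fst t, f => .fst (mapAtoms t f)
  | .snd t, f => .snd (mapAtoms t f)
  | .app t₁ t₂, f => .app (mapAtoms t₁ f) (mapAtoms t₂ f)
  | .case t br, f => .case (mapAtoms t f) (fun c => mapAtoms (br c) f)
  | .fresh, _ => .fresh
  | .unbind t, f => .unbind (mapAtoms t f)
  | .obs o args, f => .obs o (fun i => mapAtoms (args i) f)

/-- v[a := a'] : rename all occurrences of atom a to a'. -/
def renameAtom (t : Tm σ) (a a' : Atom) : Tm σ :=
  t.mapAtoms (fun b => if b = a then a' else b)

def obsSyms : Tm σ → Set σ.O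
  | .var _ => ∅
  | .unit => ∅
  | .pair t₁ t₂ => obsSyms t₁ ∪ obsSyms t₂
  | .fn e => obsSyms e
  | .con _ t => obsSyms t
  | .atom _ => ∅
  | .bindv t₁ t₂ => obsSyms t₁ ∪ obsSyms t₂
  | .lett e₁ e₂ => obsSyms e₁ ∪ obsSyms e₂
  | .fst t => obsSyms t
  | .snd t => obsSyms t
  | .app t₁ t₂ => obsSyms t₁ ∪ obsSyms t₂
  | .case t br => obsSyms t ∪ ⋃ c, obsSyms (br c)
  | .fresh => ∅
  | .unbind t => obsSyms t
  | .obs o args => insert o (⋃ i, obsSyms (args i))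

end Tm

/-! ## Frame stacks -/

inductive Stk (σ : Sig) : Type where
  | id : Stk σ
  | cons : Stk σ → Tm σ → Stk σ  -- S∘(x.e); e binds var 0

namespace Stk

variable {σ : Sig}

def atoms : Stk σ → Finset Atom
  | .id => ∅
  | .cons S e => atoms S ∪ e.atoms

def obsSyms : Stk σ → Set σ.O
  | .id => ∅
  | .cons S e => obsSyms S ∪ e.obsSyms

def mapAtoms : Stk σ → (Atom → Atom) → Stk σ
  | .id, _ => .id
  | .cons S e, f => .cons (mapAtoms S f) (e.mapAtoms f)

/-- S[e]: Id[e] = e, (S∘(x.e'))[e] = S[let x = e in e']. -/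
def fill : Stk σ → Tm σ → Tm σ
  | .id, e => e
  | .cons S e', e => fill S (Tm.lett e e')

end Stk

/-! ## Numerals -/

def numeral (σ : Sig) : ℕ → Tm σ
  | 0 => Tm.con σ.zeroC Tm.unit
  | n + 1 => Tm.con σ.succC (numeral σ n)

/-! ## Configurations -/

structure Config (σ : Sig) : Type where
  st : List Atom
  stk : Stk σ
  tm : Tm σ

/-! ## Typing -/

inductive HasTy (σ : Sig) : List (Ty σ.D) → Tm σ → Ty σ.D → Prop where
  | var (Γ : List (Ty σ.D)) (n : ℕ) (τ : Ty σ.D) :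
      Γ[n]? = some τ → HasTy σ Γ (Tm.var n) τ
  | unit : HasTy σ Γ Tm.unit Ty.unit
  | pair : IsVal v₁ → IsVal v₂ → HasTy σ Γ v₁ τ₁ → HasTy σ Γ v₂ τ₂ →
      HasTy σ Γ (Tm.pair v₁ v₂) (Ty.prod τ₁ τ₂)
  | fn : HasTy σ (τ :: Ty.arrow τ τ' :: Γ) e τ' →
      HasTy σ Γ (Tm.fn e) (Ty.arrow τ τ')
  | con : IsVal v → HasTy σ Γ v (σ.argTy c) →
      HasTy σ Γ (Tm.con c v) (Ty.data (σ.resTy c))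
  | atom : HasTy σ Γ (Tm.atom a) Ty.atm
  | bindv : IsVal v₁ → IsVal v₂ → HasTy σ Γ v₁ Ty.atm → HasTy σ Γ v₂ τ →
      HasTy σ Γ (Tm.bindv v₁ v₂) (Ty.bnd τ)
  | lett : HasTy σ Γ e₁ τ → HasTy σ (τ :: Γ) e₂ τ' →
      HasTy σ Γ (Tm.lett e₁ e₂) τ'
  | fst : IsVal v → HasTy σ Γ v (Ty.prod τ₁ τ₂) → HasTy σ Γ (Tm.fst v) τ₁
  | snd : IsVal v → HasTy σ Γ v (Ty.prod τ₁ τ₂) → HasTy σ Γ (Tm.snd v) τ₂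
  | app : IsVal v₁ → IsVal v₂ → HasTy σ Γ v₁ (Ty.arrow τ τ') → HasTy σ Γ v₂ τ →
      HasTy σ Γ (Tm.app v₁ v₂) τ'
  | case (br : σ.C → Tm σ) : IsVal v → HasTy σ Γ v (Ty.data δ) →
      (∀ c, σ.resTy c = δ → HasTy σ (σ.argTy c :: Γ) (br c) τ) →
      HasTy σ Γ (Tm.case v br) τ
  | fresh : HasTy σ Γ Tm.fresh Ty.atm
  | unbind : IsVal v → HasTy σ Γ v (Ty.bnd τ) →
      HasTy σ Γ (Tm.unbind v) (Ty.prod Ty.atm τ)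
  | obs (o : σ.O) (args : Fin (σ.arity o) → Tm σ) :
      (∀ i, IsVal (args i)) → (∀ i, HasTy σ Γ (args i) Ty.atm) →
      HasTy σ Γ (Tm.obs o args) (Ty.data σ.natD)

inductive HasTyStk (σ : Sig) : List (Ty σ.D) → Stk σ → Ty σ.D → Ty σ.D → Prop where
  | id : HasTyStk σ Γ Stk.id τ τ
  | cons : HasTy σ (τ :: Γ) e τ' → HasTyStk σ Γ S τ' τ'' →
      HasTyStk σ Γ (Stk.cons S e) τ τ''

/-! ## The transition relation -/

inductive Step (σ : Sig) : Config σ → Config σ → Prop where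
  | pop : IsVal v →
      Step σ ⟨s, Stk.cons S e, v⟩ ⟨s, S, e.subst1 v⟩
  | lett :
      Step σ ⟨s, S, Tm.lett e₁ e₂⟩ ⟨s, Stk.cons S e₂, e₁⟩
  | case (br : σ.C → Tm σ) : IsVal v →
      Step σ ⟨s, S, Tm.case (Tm.con c v) br⟩ ⟨s, S, (br c).subst1 v⟩
  | fst : IsVal v₁ → IsVal v₂ →
      Step σ ⟨s, S, Tm.fst (Tm.pair v₁ v₂)⟩ ⟨s, S, v₁⟩
  | snd : IsVal v₁ → IsVal v₂ →
      Step σ ⟨s, S, Tm.snd (Tm.pair v₁ v₂)⟩ ⟨s, S, v₂⟩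
  | app : IsVal v →
      Step σ ⟨s, S, Tm.app (Tm.fn e) v⟩ ⟨s, S, e.subst2 v (Tm.fn e)⟩
  | fresh : a' ∉ s →
      Step σ ⟨s, S, Tm.fresh⟩ ⟨s ++ [a'], S, Tm.atom a'⟩
  | unbind : a' ∉ s → IsVal v →
      Step σ ⟨s, S, Tm.unbind (Tm.bindv (Tm.atom a) v)⟩
             ⟨s ++ [a'], S, Tm.pair (Tm.atom a') (v.renameAtom a a')⟩
  | obs (o : σ.O) (as : Fin (σ.arity o) → Atom) :
      (∀ i, as i ∈ s) →
      Step σ ⟨s, S, Tm.obs o (fun i => Tm.atom (as i))⟩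
             ⟨s, S, numeral σ (σ.obsVal o s (List.ofFn as))⟩

/-! ## Termination -/

inductive TermN (σ : Sig) : Config σ → ℕ → Prop where
  | val : IsVal v → TermN σ ⟨s, Stk.id, v⟩ 0
  | step : Step σ c c' → TermN σ c' n → TermN σ c (n + 1)

def Term (σ : Sig) (c : Config σ) : Prop := ∃ n, TermN σ c n

/-! ## Equivariance and affineness of observations -/

def ObsEquivariant (σ : Sig) : Prop :=
  ∀ (π : Equiv.Perm Atom), {a : Atom | π a ≠ a}.Finite →
    ∀ (o : σ.O) (s as : List Atom),
      s.Nodup → as.length = σ.arity o → (∀ a ∈ as, a ∈ s) →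
      σ.obsVal o s as = σ.obsVal o (s.map ⇑π) (as.map ⇑π)

def AffineObs (σ : Sig) (o : σ.O) : Prop :=
  ∀ (s : List Atom) (a' : Atom) (as : List Atom),
    s.Nodup → a' ∉ s → as.length = σ.arity o → (∀ a ∈ as, a ∈ s) →
    σ.obsVal o (a' :: s) as = σ.obsVal o s as

/-! ## Operational equivalence of closed expressions, and contextual equivalence -/

def OpEq (σ : Sig) (w : Finset Atom) (e e' : Tm σ) (τ : Ty σ.D) : Prop :=
  e.atoms ∪ e'.atoms ⊆ w ∧ HasTy σ [] e τ ∧ HasTy σ [] e' τ ∧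
  ∀ (s : List Atom) (S : Stk σ) (τ' : Ty σ.D),
    s.Nodup → w ∪ S.atoms ⊆ s.toFinset → HasTyStk σ [] S τ τ' →
    (Term σ ⟨s, S, e⟩ ↔ Term σ ⟨s, S, e'⟩)

/-- A closing substitution for context Γ with atoms in w. -/
def ClosingSubst (σ : Sig) (Γ : List (Ty σ.D)) (w : Finset Atom) (vs : ℕ → Tm σ) : Prop :=
  ∀ i τ, Γ[i]? = some τ → IsVal (vs i) ∧ HasTy σ [] (vs i) τ ∧ (vs i).atoms ⊆ w

def CtxEq (σ : Sig) (Γ : List (Ty σ.D)) (w : Finset Atom) (e e' : Tm σ) (τ : Ty σ.D) : Prop :=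
  e.atoms ∪ e'.atoms ⊆ w ∧ HasTy σ Γ e τ ∧ HasTy σ Γ e' τ ∧
  ∀ (w' : Finset Atom) (vs : ℕ → Tm σ), w ⊆ w' → ClosingSubst σ Γ w' vs →
    OpEq σ w' (e.subst vs) (e'.subst vs) τ

/-! ## Expression relations -/

def ExprRel (σ : Sig) : Type :=
  List (Ty σ.D) → Finset Atom → Tm σ → Tm σ → Ty σ.D → Prop

def IsExprRel (σ : Sig) (R : ExprRel σ) : Prop :=
  ∀ Γ w e e' τ, R Γ w e e' τ →
    e.atoms ∪ e'.atoms ⊆ w ∧ HasTy σ Γ e τ ∧ HasTy σ Γ e' τ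

/-- Compatible refinement ℰ̂ of an expression relation ℰ. -/
inductive CompRef (σ : Sig) (R : ExprRel σ) :
    List (Ty σ.D) → Finset Atom → Tm σ → Tm σ → Ty σ.D → Prop where
  | var (Γ : List (Ty σ.D)) (n : ℕ) (τ : Ty σ.D) :
      Γ[n]? = some τ → CompRef σ R Γ w (Tm.var n) (Tm.var n) τ
  | unit : CompRef σ R Γ w Tm.unit Tm.unit Ty.unit
  | pair : IsVal v₁ → IsVal v₂ → IsVal v₁' → IsVal v₂' →
      R Γ w v₁ v₁' τ₁ → R Γ w v₂ v₂' τ₂ →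
      CompRef σ R Γ w (Tm.pair v₁ v₂) (Tm.pair v₁' v₂') (Ty.prod τ₁ τ₂)
  | fn : R (τ :: Ty.arrow τ τ' :: Γ) w e e' τ' →
      CompRef σ R Γ w (Tm.fn e) (Tm.fn e') (Ty.arrow τ τ')
  | con : IsVal v → IsVal v' → R Γ w v v' (σ.argTy c) →
      CompRef σ R Γ w (Tm.con c v) (Tm.con c v') (Ty.data (σ.resTy c))
  | atom : a ∈ w → CompRef σ R Γ w (Tm.atom a) (Tm.atom a) Ty.atm
  | bindv : IsVal v₁ → IsVal v₂ → IsVal v₁' → IsVal v₂' →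
      R Γ w v₁ v₁' Ty.atm → R Γ w v₂ v₂' τ →
      CompRef σ R Γ w (Tm.bindv v₁ v₂) (Tm.bindv v₁' v₂') (Ty.bnd τ)
  | lett : R Γ w e₁ e₁' τ → R (τ :: Γ) w e₂ e₂' τ' →
      CompRef σ R Γ w (Tm.lett e₁ e₂) (Tm.lett e₁' e₂') τ'
  | fst : IsVal v → IsVal v' → R Γ w v v' (Ty.prod τ₁ τ₂) →
      CompRef σ R Γ w (Tm.fst v) (Tm.fst v') τ₁
  | snd : IsVal v → IsVal v' → R Γ w v v' (Ty.prod τ₁ τ₂) →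
      CompRef σ R Γ w (Tm.snd v) (Tm.snd v') τ₂
  | app : IsVal v₁ → IsVal v₂ → IsVal v₁' → IsVal v₂' →
      R Γ w v₁ v₁' (Ty.arrow τ τ') → R Γ w v₂ v₂' τ →
      CompRef σ R Γ w (Tm.app v₁ v₂) (Tm.app v₁' v₂') τ'
  | case (br br' : σ.C → Tm σ) : IsVal v → IsVal v' → R Γ w v v' (Ty.data δ) →
      (∀ c, σ.resTy c = δ → R (σ.argTy c :: Γ) w (br c) (br' c) τ) →
      CompRef σ R Γ w (Tm.case v br) (Tm.case v' br') τ
  | fresh : CompRef σ R Γ w Tm.fresh Tm.fresh Ty.atm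
  | unbind : IsVal v → IsVal v' → R Γ w v v' (Ty.bnd τ) →
      CompRef σ R Γ w (Tm.unbind v) (Tm.unbind v') (Ty.prod Ty.atm τ)
  | obs (o : σ.O) (args args' : Fin (σ.arity o) → Tm σ) :
      (∀ i, IsVal (args i)) → (∀ i, IsVal (args' i)) →
      (∀ i, R Γ w (args i) (args' i) Ty.atm) →
      CompRef σ R Γ w (Tm.obs o args) (Tm.obs o args') (Ty.data σ.natD)

/-- Compatible refinement extended to frame stacks. -/
inductive StkRef (σ : Sig) (R : ExprRel σ) :
    List (Ty σ.D) → Finset Atom → Stk σ → Stk σ → Ty σ.D → Ty σ.D → Prop where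
  | id : StkRef σ R Γ w Stk.id Stk.id τ τ
  | cons : R (τ :: Γ) w e e' τ' → StkRef σ R Γ w S S' τ' τ'' →
      StkRef σ R Γ w (Stk.cons S e) (Stk.cons S' e') τ τ''

/-! ## Properties of expression relations -/

def RelRefl (σ : Sig) (R : ExprRel σ) : Prop :=
  ∀ Γ w (e : Tm σ) τ, e.atoms ⊆ w → HasTy σ Γ e τ → R Γ w e e τ

def RelSymm (σ : Sig) (R : ExprRel σ) : Prop :=
  ∀ Γ w e e' τ, R Γ w e e' τ → R Γ w e' e τ

def RelTrans (σ : Sig) (R : ExprRel σ) : Prop :=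
  ∀ Γ w e e' e'' τ, R Γ w e e' τ → R Γ w e' e'' τ → R Γ w e e'' τ

def RelCompat (σ : Sig) (R : ExprRel σ) : Prop :=
  ∀ Γ w e e' τ, CompRef σ R Γ w e e' τ → R Γ w e e' τ

def RelSubst (σ : Sig) (R : ExprRel σ) : Prop :=
  ∀ Γ w (v v' : Tm σ) τ e e' τ', IsVal v → IsVal v' →
    R Γ w v v' τ → R (τ :: Γ) w e e' τ' →
    R Γ w (e.subst1 v) (e'.subst1 v') τ'

def RelEquivariant (σ : Sig) (R : ExprRel σ) : Prop :=
  ∀ (π : Equiv.Perm Atom), {a : Atom | π a ≠ a}.Finite →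
    ∀ Γ w (e e' : Tm σ) τ, R Γ w e e' τ →
      R Γ (w.image ⇑π) (e.mapAtoms ⇑π) (e'.mapAtoms ⇑π) τ

def RelAdequate (σ : Sig) (R : ExprRel σ) : Prop :=
  ∀ w e e' τ, R [] w e e' τ → OpEq σ w e e' τ

/-! ## The Howe relation (least relation closed under the Howe rule) -/

def Howe (σ : Sig) : ExprRel σ := fun Γ w e e'' τ =>
  ∀ R : ExprRel σ,
    (∀ Γ' w' a c τ',
      (∃ b, CompRef σ R Γ' w' a b τ' ∧ CtxEq σ Γ' w' b c τ') → R Γ' w' a c τ') →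
    R Γ w e e'' τ

/-! ## Nominal arities and α-equivalence -/

inductive NominalArity (σ : Sig) : Ty σ.D → Prop where
  | unit : NominalArity σ Ty.unit
  | prod : NominalArity σ t₁ → NominalArity σ t₂ → NominalArity σ (Ty.prod t₁ t₂)
  | data (d : σ.D) : NominalArity σ (Ty.data d)
  | atm : NominalArity σ Ty.atm
  | bnd : NominalArity σ t → NominalArity σ (Ty.bnd t)

inductive AlphaEq (σ : Sig) : Finset Atom → Tm σ → Tm σ → Ty σ.D → Prop where
  | unit : AlphaEq σ w Tm.unit Tm.unit Ty.unit
  | pair : AlphaEq σ w v₁ v₁' a₁ → AlphaEq σ w v₂ v₂' a₂ →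
      AlphaEq σ w (Tm.pair v₁ v₂) (Tm.pair v₁' v₂') (Ty.prod a₁ a₂)
  | con : AlphaEq σ w v v' (σ.argTy c) →
      AlphaEq σ w (Tm.con c v) (Tm.con c v') (Ty.data (σ.resTy c))
  | atom : a ∈ w → AlphaEq σ w (Tm.atom a) (Tm.atom a) Ty.atm
  | bindv (a a' a'' : Atom) (v v' : Tm σ) : a'' ∉ w →
      insert a (insert a' (v.atoms ∪ v'.atoms)) ⊆ w →
      AlphaEq σ (insert a'' w) (v.renameAtom a a'') (v'.renameAtom a' a'') ar →
      AlphaEq σ w (Tm.bindv (Tm.atom a) v) (Tm.bindv (Tm.atom a') v') (Ty.bnd ar)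

/-! ## Well-typed configurations -/

def ConfigTy (σ : Sig) (w : Finset Atom) (c : Config σ) (τ : Ty σ.D) : Prop :=
  c.st.Nodup ∧ c.stk.atoms ∪ c.tm.atoms ⊆ c.st.toFinset ∧ c.st.toFinset = w ∧
  ∃ τ', HasTyStk σ [] c.stk τ' τ ∧ HasTy σ [] c.tm τ'

/-! ### Syntax: atom maps, substitution and scoping -/

namespace Tm

variable {σ : Sig}

theorem mapAtoms_congr (t : Tm σ) {f g : Atom → Atom} (h : ∀ x ∈ t.atoms, f x = g x) :
    t.mapAtoms f = t.mapAtoms g := by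
  induction t with
  | case t br iht ihb =>
    simp only [mapAtoms, case.injEq]
    refine ⟨iht fun x hx => h x (by simp [atoms, hx]), funext fun c => ihb c fun x hx => h x ?_⟩
    simp only [atoms, Finset.mem_union, Finset.mem_biUnion, Finset.mem_univ, true_and]
    exact Or.inr ⟨c, hx⟩
  | obs o args ih =>
    simp only [mapAtoms, obs.injEq, heq_eq_eq, true_and]
    refine funext fun i => ih i fun x hx => h x ?_
    simp only [atoms, Finset.mem_biUnion, Finset.mem_univ, true_and]
    exact ⟨i, hx⟩
  | _ => simp_all [mapAtoms, atoms]

theorem mapAtoms_mapAtoms (t : Tm σ) (f g : Atom → Atom) :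
    (t.mapAtoms f).mapAtoms g = t.mapAtoms (g ∘ f) := by
  induction t <;> simp_all [mapAtoms]

theorem mapAtoms_id (t : Tm σ) : t.mapAtoms (fun x => x) = t := by
  induction t <;> simp_all [mapAtoms]

theorem mapAtoms_renV (t : Tm σ) (f : Atom → Atom) (r : ℕ → ℕ) :
    (t.renV r).mapAtoms f = (t.mapAtoms f).renV r := by
  induction t generalizing r <;> simp_all [mapAtoms, renV]

theorem mapAtoms_ups (ρ : ℕ → Tm σ) (f : Atom → Atom) :
    (fun n => (ups ρ n).mapAtoms f) = ups (fun n => (ρ n).mapAtoms f) := by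
  funext n
  cases n <;> simp [ups, mapAtoms, mapAtoms_renV]

theorem mapAtoms_subst (t : Tm σ) (f : Atom → Atom) (ρ : ℕ → Tm σ) :
    (t.subst ρ).mapAtoms f = (t.mapAtoms f).subst (fun n => (ρ n).mapAtoms f) := by
  induction t generalizing ρ <;> simp_all [mapAtoms, subst, mapAtoms_ups]

theorem mapAtoms_subst1 (t v : Tm σ) (f : Atom → Atom) :
    (t.subst1 v).mapAtoms f = (t.mapAtoms f).subst1 (v.mapAtoms f) := by
  rw [subst1, mapAtoms_subst, subst1]
  congr 1
  funext n
  cases n <;> rfl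

theorem mapAtoms_subst2 (t v u : Tm σ) (f : Atom → Atom) :
    (t.subst2 v u).mapAtoms f = (t.mapAtoms f).subst2 (v.mapAtoms f) (u.mapAtoms f) := by
  rw [subst2, mapAtoms_subst, subst2]
  congr 1
  funext n
  rcases n with _ | _ | n <;> rfl

theorem atoms_mapAtoms (t : Tm σ) (f : Atom → Atom) :
    (t.mapAtoms f).atoms = t.atoms.image f := by
  induction t <;> simp_all [mapAtoms, atoms, Finset.image_union]
  all_goals
    ext x
    simp only [Finset.mem_union, Finset.mem_biUnion, Finset.mem_image, Finset.mem_univ, true_and]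
    grind

theorem atoms_renV (t : Tm σ) (r : ℕ → ℕ) : (t.renV r).atoms = t.atoms := by
  induction t generalizing r <;> simp_all [renV, atoms]

theorem atoms_ups {ρ : ℕ → Tm σ} {A : Finset Atom} (h : ∀ n, (ρ n).atoms ⊆ A) (n : ℕ) :
    (ups ρ n).atoms ⊆ A := by
  cases n <;> simp [ups, atoms, atoms_renV, h]

theorem atoms_subst (t : Tm σ) (ρ : ℕ → Tm σ) (A : Finset Atom) (h : ∀ n, (ρ n).atoms ⊆ A) :
    (t.subst ρ).atoms ⊆ t.atoms ∪ A := by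
  induction t generalizing ρ with
  | var n => simpa [subst, atoms] using h n
  | unit => simp [subst, atoms]
  | fresh => simp [subst, atoms]
  | atom a => simp [subst, atoms]
  | fn e ih => exact ih _ (atoms_ups (atoms_ups h))
  | con c t ih => exact ih _ h
  | fst t ih => exact ih _ h
  | snd t ih => exact ih _ h
  | unbind t ih => exact ih _ h
  | pair t u iht ihu =>
    simp only [subst, atoms]; have := iht _ h; have := ihu _ h; grind
  | bindv t u iht ihu =>
    simp only [subst, atoms]; have := iht _ h; have := ihu _ h; grind
  | app t u iht ihu =>
    simp only [subst, atoms]; have := iht _ h; have := ihu _ h; grind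
  | lett t u iht ihu =>
    simp only [subst, atoms]; have := iht _ h; have := ihu _ (atoms_ups h); grind
  | case t br iht ihb =>
    simp only [subst, atoms]
    have h1 := iht _ h
    have h2 := fun c => ihb c _ (atoms_ups h)
    intro x
    simp only [Finset.mem_union, Finset.mem_biUnion, Finset.mem_univ, true_and]
    grind
  | obs o args ih =>
    simp only [subst, atoms]
    have h2 := fun c => ih c _ h
    intro x
    simp only [Finset.mem_union, Finset.mem_biUnion, Finset.mem_univ, true_and]
    grind

theorem atoms_subst1 (t v : Tm σ) : (t.subst1 v).atoms ⊆ t.atoms ∪ v.atoms :=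
  atoms_subst _ _ _ fun n => by cases n <;> simp [cons1, atoms]

theorem atoms_subst2 (t v u : Tm σ) :
    (t.subst2 v u).atoms ⊆ t.atoms ∪ (v.atoms ∪ u.atoms) :=
  atoms_subst _ _ _ fun n => by rcases n with _ | _ | n <;> simp [cons2, atoms]

theorem atoms_renameAtom (t : Tm σ) (a b : Atom) :
    (t.renameAtom a b).atoms ⊆ insert b t.atoms := by
  rw [renameAtom, atoms_mapAtoms]
  intro x
  simp only [Finset.mem_image, Finset.mem_insert]
  grind

/-- Renaming to an atom that does not occur agrees with swapping. -/
theorem renameAtom_eq_swap (t : Tm σ) (a b : Atom) (hb : b ∉ t.atoms) :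
    t.renameAtom a b = t.mapAtoms (Equiv.swap a b) := by
  refine mapAtoms_congr _ fun x hx => ?_
  have : x ≠ b := by rintro rfl; exact hb hx
  simp only [Equiv.swap_apply_def]
  grind

/-- Abstraction of an atom: `abs a t k` replaces every occurrence of `a` in `t` by the variable
with index `k` (counted outside the binders of `t`), the variables from `k` on being shifted by one
to make room. Shifting matters even for well-typed closed terms, because the branches of a `case` for
constructors of another data type are unconstrained by the typing rules and may have stray free
variables. -/
def abs (a : Atom) : Tm σ → ℕ → Tm σ
  | .var n, k => .var (if n < k then n else n + 1)
  | .unit, _ => .unit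
  | .pair t₁ t₂, k => .pair (abs a t₁ k) (abs a t₂ k)
  | .fn e, k => .fn (abs a e (k + 2))
  | .con c t, k => .con c (abs a t k)
  | .atom b, k => if b = a then .var k else .atom b
  | .bindv t₁ t₂, k => .bindv (abs a t₁ k) (abs a t₂ k)
  | .lett e₁ e₂, k => .lett (abs a e₁ k) (abs a e₂ (k + 1))
  | .fst t, k => .fst (abs a t k)
  | .snd t, k => .snd (abs a t k)
  | .app t₁ t₂, k => .app (abs a t₁ k) (abs a t₂ k)
  | .case t br, k => .case (abs a t k) (fun c => abs a (br c) (k + 1))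
  | .fresh, _ => .fresh
  | .unbind t, k => .unbind (abs a t k)
  | .obs o args, k => .obs o (fun i => abs a (args i) k)

theorem atoms_abs (a : Atom) (t : Tm σ) (k : ℕ) : (t.abs a k).atoms ⊆ t.atoms.erase a := by
  induction t generalizing k with
  | atom b =>
    by_cases h : b = a
    · simp [abs, h, atoms]
    · simp [abs, h, atoms]
  | case t br iht ihb =>
    simp only [abs, atoms]
    have h1 := iht k
    have h2 := fun c => ihb c (k + 1)
    intro x
    simp only [Finset.mem_union, Finset.mem_biUnion, Finset.mem_univ, true_and, Finset.mem_erase]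
    grind
  | obs o args ih =>
    simp only [abs, atoms]
    have h2 := fun c => ih c k
    intro x
    simp only [Finset.mem_biUnion, Finset.mem_univ, true_and, Finset.mem_erase]
    grind
  | pair t u iht ihu => simp only [abs, atoms]; have := iht k; have := ihu k; grind
  | bindv t u iht ihu => simp only [abs, atoms]; have := iht k; have := ihu k; grind
  | app t u iht ihu => simp only [abs, atoms]; have := iht k; have := ihu k; grind
  | lett t u iht ihu => simp only [abs, atoms]; have := iht k; have := ihu (k + 1); grind
  | _ => simp_all [abs, atoms]

end Tm

section Values

variable {σ : Sig}

theorem IsVal.mapAtoms {v : Tm σ} (h : IsVal v) (f : Atom → Atom) : IsVal (v.mapAtoms f) := by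
  induction h <;> constructor <;> assumption

theorem IsVal.abs {v : Tm σ} (h : IsVal v) (a : Atom) (k : ℕ) : IsVal (v.abs a k) := by
  induction h with
  | @atom b =>
    simp only [Tm.abs]
    split <;> constructor
  | _ => constructor <;> assumption

theorem HasTy.mapAtoms {Γ : List (Ty σ.D)} {e : Tm σ} {τ : Ty σ.D} (h : HasTy σ Γ e τ)
    (f : Atom → Atom) : HasTy σ Γ (e.mapAtoms f) τ := by
  induction h with
  | var Γ n τ h => exact .var _ _ _ h
  | case br hv _ _ ih1 ih2 => exact .case _ (hv.mapAtoms f) ih1 ih2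
  | obs o args hv _ ih => exact .obs _ _ (fun i => (hv i).mapAtoms f) ih
  | lett _ _ ih1 ih2 => exact .lett ih1 ih2
  | fn _ ih => exact .fn ih
  | _ => constructor <;> first | assumption | exact IsVal.mapAtoms (by assumption) f

theorem HasTyStk.mapAtoms {Γ : List (Ty σ.D)} {S : Stk σ} {τ τ' : Ty σ.D}
    (h : HasTyStk σ Γ S τ τ') (f : Atom → Atom) : HasTyStk σ Γ (S.mapAtoms f) τ τ' := by
  induction h with
  | id => exact .id
  | cons h _ ih => exact .cons (h.mapAtoms f) ih

theorem IsVal.renV {v : Tm σ} (h : IsVal v) (r : ℕ → ℕ) : IsVal (v.renV r) := by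
  induction h <;> constructor <;> assumption

theorem HasTy.renV {Γ : List (Ty σ.D)} {e : Tm σ} {τ : Ty σ.D} (h : HasTy σ Γ e τ)
    (Δ : List (Ty σ.D)) (r : ℕ → ℕ) (hr : ∀ n τ, Γ[n]? = some τ → Δ[r n]? = some τ) :
    HasTy σ Δ (e.renV r) τ := by
  have up : ∀ {Γ Δ : List (Ty σ.D)} {r : ℕ → ℕ} (τ₀ : Ty σ.D),
      (∀ n τ, Γ[n]? = some τ → Δ[r n]? = some τ) →
      ∀ n τ, (τ₀ :: Γ)[n]? = some τ → (τ₀ :: Δ)[upr r n]? = some τ := by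
    intro Γ Δ r τ₀ h n τ hn
    cases n with
    | zero => simpa [upr] using hn
    | succ n => simpa [upr] using h n τ (by simpa using hn)
  induction h generalizing Δ r with
  | var Γ n τ h => exact .var _ _ _ (hr _ _ h)
  | case br hv _ _ ih1 ih2 =>
    exact .case _ (hv.renV r) (ih1 _ _ hr) fun c hc => ih2 c hc _ _ (up _ hr)
  | obs o args hv _ ih => exact .obs _ _ (fun i => (hv i).renV r) fun i => ih i _ _ hr
  | lett _ _ ih1 ih2 => exact .lett (ih1 _ _ hr) (ih2 _ _ (up _ hr))
  | fn _ ih => exact .fn (ih _ _ (up _ (up _ hr)))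
  | unit => exact .unit
  | atom => exact .atom
  | fresh => exact .fresh
  | pair h1 h2 _ _ ih1 ih2 => exact .pair (h1.renV r) (h2.renV r) (ih1 _ _ hr) (ih2 _ _ hr)
  | bindv h1 h2 _ _ ih1 ih2 => exact .bindv (h1.renV r) (h2.renV r) (ih1 _ _ hr) (ih2 _ _ hr)
  | app h1 h2 _ _ ih1 ih2 => exact .app (h1.renV r) (h2.renV r) (ih1 _ _ hr) (ih2 _ _ hr)
  | con h1 _ ih1 => exact .con (h1.renV r) (ih1 _ _ hr)
  | fst h1 _ ih1 => exact .fst (h1.renV r) (ih1 _ _ hr)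
  | snd h1 _ ih1 => exact .snd (h1.renV r) (ih1 _ _ hr)
  | unbind h1 _ ih1 => exact .unbind (h1.renV r) (ih1 _ _ hr)

theorem HasTy.abs {Γ : List (Ty σ.D)} {e : Tm σ} {τ : Ty σ.D} (h : HasTy σ Γ e τ)
    (a : Atom) (Γ₁ Γ₂ : List (Ty σ.D)) (hΓ : Γ = Γ₁ ++ Γ₂) :
    HasTy σ (Γ₁ ++ Ty.atm :: Γ₂) (e.abs a Γ₁.length) τ := by
  induction h generalizing Γ₁ with
  | var Γ n τ h =>
    subst hΓ
    refine .var _ _ _ ?_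
    split <;> grind
  | @atom Γ b =>
    simp only [Tm.abs]
    split
    · exact .var _ _ _ (by simp)
    · exact .atom
  | case br hv _ _ ih1 ih2 =>
    exact .case _ (hv.abs a _) (ih1 _ hΓ) fun c hc => ih2 c hc (_ :: Γ₁) (by simp [hΓ])
  | obs o args hv _ ih => exact .obs _ _ (fun i => (hv i).abs a _) fun i => ih i _ hΓ
  | lett _ _ ih1 ih2 => exact .lett (ih1 _ hΓ) (ih2 (_ :: Γ₁) (by simp [hΓ]))
  | fn _ ih => exact .fn (ih (_ :: _ :: Γ₁) (by simp [hΓ]))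
  | unit => exact .unit
  | fresh => exact .fresh
  | pair h1 h2 _ _ ih1 ih2 => exact .pair (h1.abs a _) (h2.abs a _) (ih1 _ hΓ) (ih2 _ hΓ)
  | bindv h1 h2 _ _ ih1 ih2 => exact .bindv (h1.abs a _) (h2.abs a _) (ih1 _ hΓ) (ih2 _ hΓ)
  | app h1 h2 _ _ ih1 ih2 => exact .app (h1.abs a _) (h2.abs a _) (ih1 _ hΓ) (ih2 _ hΓ)
  | con h1 _ ih1 => exact .con (h1.abs a _) (ih1 _ hΓ)
  | fst h1 _ ih1 => exact .fst (h1.abs a _) (ih1 _ hΓ)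
  | snd h1 _ ih1 => exact .snd (h1.abs a _) (ih1 _ hΓ)
  | unbind h1 _ ih1 => exact .unbind (h1.abs a _) (ih1 _ hΓ)

end Values

section Substitution

variable {σ : Sig}

theorem upr_id : upr (fun n => n) = fun n => n := by
  funext n
  cases n <;> rfl

theorem renV_id (t : Tm σ) : t.renV (fun n => n) = t := by
  induction t <;> simp_all [Tm.renV, upr_id]

theorem renV_subst (t : Tm σ) (r r' : ℕ → ℕ) (ρ : ℕ → Tm σ)
    (h : ∀ n, ρ (r n) = .var (r' n)) : (t.renV r).subst ρ = t.renV r' := by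
  have up : ∀ {r r' : ℕ → ℕ} {ρ : ℕ → Tm σ}, (∀ n, ρ (r n) = .var (r' n)) →
      ∀ n, Tm.ups ρ (upr r n) = .var (upr r' n) := by
    intro r r' ρ h n
    cases n with
    | zero => rfl
    | succ n => simp [upr, Tm.ups, h, Tm.renV]
  induction t generalizing r r' ρ with
  | var n => exact h n
  | unit => rfl
  | fresh => rfl
  | atom a => rfl
  | fn e ih => simp only [Tm.renV, Tm.subst, ih _ _ _ (up (up h))]
  | lett t u iht ihu => simp only [Tm.renV, Tm.subst, iht _ _ _ h, ihu _ _ _ (up h)]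
  | case t br iht ihb => simp only [Tm.renV, Tm.subst, iht _ _ _ h, ihb _ _ _ _ (up h)]
  | obs o args ih => simp only [Tm.renV, Tm.subst, ih _ _ _ _ h]
  | con c t ih => simp only [Tm.renV, Tm.subst, ih _ _ _ h]
  | fst t ih => simp only [Tm.renV, Tm.subst, ih _ _ _ h]
  | snd t ih => simp only [Tm.renV, Tm.subst, ih _ _ _ h]
  | unbind t ih => simp only [Tm.renV, Tm.subst, ih _ _ _ h]
  | pair t u iht ihu => simp only [Tm.renV, Tm.subst, iht _ _ _ h, ihu _ _ _ h]
  | bindv t u iht ihu => simp only [Tm.renV, Tm.subst, iht _ _ _ h, ihu _ _ _ h]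
  | app t u iht ihu => simp only [Tm.renV, Tm.subst, iht _ _ _ h, ihu _ _ _ h]

/-- `SubstAt b k ρ` says that `ρ` substitutes the atom `b` for the variable `k` and closes the gap:
it is `[b/x]` taken under `k` binders. -/
def SubstAt (b : Atom) (k : ℕ) (ρ : ℕ → Tm σ) : Prop :=
  (∀ i < k, ρ i = .var i) ∧ ρ k = .atom b ∧ ∀ i, k ≤ i → ρ (i + 1) = .var i

theorem SubstAt.ups {b : Atom} {k : ℕ} {ρ : ℕ → Tm σ} (h : SubstAt b k ρ) :
    SubstAt b (k + 1) (Tm.ups ρ) := by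
  obtain ⟨h1, h2, h3⟩ := h
  refine ⟨?_, by simp [Tm.ups, h2, Tm.renV], ?_⟩
  · intro i hi
    cases i with
    | zero => rfl
    | succ i => simp [Tm.ups, h1 i (by omega), Tm.renV]
  · intro i hi
    obtain ⟨i, rfl⟩ : ∃ j, i = j + 1 := ⟨i - 1, by omega⟩
    simp [Tm.ups, h3 i (by omega), Tm.renV]

/-- Abstracting `a` and then substituting `b` renames `a` to `b`. -/
theorem abs_subst (t : Tm σ) (a b : Atom) (k : ℕ) (ρ : ℕ → Tm σ) (h : SubstAt b k ρ) :
    (t.abs a k).subst ρ = t.renameAtom a b := by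
  simp only [Tm.renameAtom]
  induction t generalizing k ρ with
  | var n =>
    simp only [Tm.abs, Tm.subst, Tm.mapAtoms]
    split
    · exact h.1 _ (by assumption)
    · exact h.2.2 _ (by omega)
  | atom c =>
    simp only [Tm.abs, Tm.mapAtoms]
    split
    · exact h.2.1
    · rfl
  | unit => rfl
  | fresh => rfl
  | fn e ih => simp only [Tm.abs, Tm.subst, Tm.mapAtoms, ih _ _ h.ups.ups]
  | lett t u iht ihu => simp only [Tm.abs, Tm.subst, Tm.mapAtoms, iht _ _ h, ihu _ _ h.ups]
  | case t br iht ihb => simp only [Tm.abs, Tm.subst, Tm.mapAtoms, iht _ _ h, ihb _ _ _ h.ups]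
  | obs o args ih => simp only [Tm.abs, Tm.subst, Tm.mapAtoms, ih _ _ _ h]
  | con c t ih => simp only [Tm.abs, Tm.subst, Tm.mapAtoms, ih _ _ h]
  | fst t ih => simp only [Tm.abs, Tm.subst, Tm.mapAtoms, ih _ _ h]
  | snd t ih => simp only [Tm.abs, Tm.subst, Tm.mapAtoms, ih _ _ h]
  | unbind t ih => simp only [Tm.abs, Tm.subst, Tm.mapAtoms, ih _ _ h]
  | pair t u iht ihu => simp only [Tm.abs, Tm.subst, Tm.mapAtoms, iht _ _ h, ihu _ _ h]
  | bindv t u iht ihu => simp only [Tm.abs, Tm.subst, Tm.mapAtoms, iht _ _ h, ihu _ _ h]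
  | app t u iht ihu => simp only [Tm.abs, Tm.subst, Tm.mapAtoms, iht _ _ h, ihu _ _ h]

/-- `plug S e` is `S[e]` for `e` living in a context with one more variable than `S`: unlike
`Stk.fill`, it weakens the frames of `S` by that variable. -/
def plug : Stk σ → Tm σ → Tm σ
  | .id, e => e
  | .cons S e', e => plug S (.lett e (e'.renV (upr Nat.succ)))

theorem plug_subst1 (S : Stk σ) (e z : Tm σ) : (plug S e).subst1 z = S.fill (e.subst1 z) := by
  induction S generalizing e with
  | id => rfl
  | cons S e' ih =>
    rw [plug, ih, Stk.fill]
    congr 1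
    simp only [Tm.subst1, Tm.subst, Tm.lett.injEq, true_and]
    rw [renV_subst _ _ (fun n => n), renV_id]
    intro n
    cases n <;> rfl

theorem plug_mapAtoms (S : Stk σ) (e : Tm σ) (f : Atom → Atom) :
    (plug S e).mapAtoms f = plug (S.mapAtoms f) (e.mapAtoms f) := by
  induction S generalizing e with
  | id => rfl
  | cons S e' ih => simp [plug, ih, Stk.mapAtoms, Tm.mapAtoms, Tm.mapAtoms_renV]

theorem atoms_plug (S : Stk σ) (e : Tm σ) : (plug S e).atoms = S.atoms ∪ e.atoms := by
  induction S generalizing e with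
  | id => simp [plug, Stk.atoms]
  | cons S e' ih =>
    simp only [plug, ih, Stk.atoms, Tm.atoms, Tm.atoms_renV]
    ext x
    simp only [Finset.mem_union]
    tauto

theorem HasTy.plug {Γ : List (Ty σ.D)} {S : Stk σ} {e : Tm σ} {τ₀ τ τ' : Ty σ.D}
    (hS : HasTyStk σ Γ S τ τ') (he : HasTy σ (τ₀ :: Γ) e τ) :
    HasTy σ (τ₀ :: Γ) (plug S e) τ' := by
  induction hS generalizing e with
  | id => exact he
  | cons h _ ih =>
    refine ih (.lett he (h.renV _ _ ?_))
    intro n τ hn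
    cases n <;> simpa [upr] using hn

end Substitution

/-! ### Machine steps, and invariance of termination under change of state -/

section Machine

variable {σ : Sig}

theorem Stk.mapAtoms_congr (S : Stk σ) {f g : Atom → Atom} (h : ∀ x ∈ S.atoms, f x = g x) :
    S.mapAtoms f = S.mapAtoms g := by
  induction S with
  | id => rfl
  | cons S e ih =>
    simp only [Stk.mapAtoms, Stk.cons.injEq]
    exact ⟨ih fun x hx => h x (by simp [Stk.atoms, hx]),
      Tm.mapAtoms_congr _ fun x hx => h x (by simp [Stk.atoms, hx])⟩

theorem Stk.mapAtoms_mapAtoms (S : Stk σ) (f g : Atom → Atom) :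
    (S.mapAtoms f).mapAtoms g = S.mapAtoms (g ∘ f) := by
  induction S <;> simp_all [Stk.mapAtoms, Tm.mapAtoms_mapAtoms]

theorem Stk.mapAtoms_id (S : Stk σ) : S.mapAtoms (fun x => x) = S := by
  induction S <;> simp_all [Stk.mapAtoms, Tm.mapAtoms_id]

theorem Stk.atoms_mapAtoms (S : Stk σ) (f : Atom → Atom) :
    (S.mapAtoms f).atoms = S.atoms.image f := by
  induction S <;> simp_all [Stk.mapAtoms, Stk.atoms, Tm.atoms_mapAtoms, Finset.image_union]

theorem atoms_numeral (n : ℕ) : (numeral σ n).atoms = ∅ := by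
  induction n <;> simp_all [numeral, Tm.atoms]

theorem mapAtoms_numeral (n : ℕ) (f : Atom → Atom) :
    (numeral σ n).mapAtoms f = numeral σ n := by
  induction n <;> simp_all [numeral, Tm.mapAtoms]

theorem term_of_step {c c' : Config σ} (h : Step σ c c') (h' : Term σ c') : Term σ c := by
  obtain ⟨n, hn⟩ := h'
  exact ⟨n + 1, .step h hn⟩

theorem term_lett {s : List Atom} {S : Stk σ} {e₁ e₂ : Tm σ} :
    Term σ ⟨s, S, .lett e₁ e₂⟩ ↔ Term σ ⟨s, .cons S e₂, e₁⟩ := by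
  refine ⟨?_, term_of_step .lett⟩
  rintro ⟨_, h⟩
  cases h with
  | val h => cases h
  | step h h' =>
    cases h with
    | pop h => cases h
    | lett => exact ⟨_, h'⟩

theorem term_pop {s : List Atom} {S : Stk σ} {e v : Tm σ} (hv : IsVal v) :
    Term σ ⟨s, .cons S e, v⟩ ↔ Term σ ⟨s, S, e.subst1 v⟩ := by
  refine ⟨?_, term_of_step (.pop hv)⟩
  rintro ⟨_, h⟩
  cases h with
  | step h h' =>
    cases h with
    | pop h => exact ⟨_, h'⟩
    | _ => cases hv

theorem term_fst {s : List Atom} {S : Stk σ} {v w : Tm σ} (hv : IsVal v) (hw : IsVal w) :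
    Term σ ⟨s, S, .fst (.pair v w)⟩ ↔ Term σ ⟨s, S, v⟩ := by
  refine ⟨?_, term_of_step (.fst hv hw)⟩
  rintro ⟨_, h⟩
  cases h with
  | val h => cases h
  | step h h' =>
    cases h with
    | pop h => cases h
    | fst => exact ⟨_, h'⟩

theorem term_snd {s : List Atom} {S : Stk σ} {v w : Tm σ} (hv : IsVal v) (hw : IsVal w) :
    Term σ ⟨s, S, .snd (.pair v w)⟩ ↔ Term σ ⟨s, S, w⟩ := by
  refine ⟨?_, term_of_step (.snd hv hw)⟩
  rintro ⟨_, h⟩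
  cases h with
  | val h => cases h
  | step h h' =>
    cases h with
    | pop h => cases h
    | snd => exact ⟨_, h'⟩

theorem term_unbind {s : List Atom} {S : Stk σ} {v : Tm σ} {a : Atom} (hv : IsVal v) :
    Term σ ⟨s, S, .unbind (.bindv (.atom a) v)⟩ ↔
      ∃ b ∉ s, Term σ ⟨s ++ [b], S, .pair (.atom b) (v.renameAtom a b)⟩ := by
  constructor
  · rintro ⟨_, h⟩
    cases h with
    | val h => cases h
    | step h h' =>
      cases h with
      | pop h => cases h
      | unbind hb => exact ⟨_, hb, _, h'⟩
  · rintro ⟨b, hb, h⟩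
    exact term_of_step (.unbind hb hv) h

theorem term_fill {s : List Atom} {S : Stk σ} {e : Tm σ} :
    Term σ ⟨s, .id, S.fill e⟩ ↔ Term σ ⟨s, S, e⟩ := by
  induction S generalizing e with
  | id => rfl
  | cons S e' ih => rw [Stk.fill, ih, term_lett]

/-- Two states related by a finite permutation `π`, up to a prefix (the oldest atoms) present in
only one of them. -/
def StateRel (π : Equiv.Perm Atom) (s t : List Atom) : Prop :=
  s.Nodup ∧ t.Nodup ∧ {x | π x ≠ x}.Finite ∧
    ∃ pre, t = pre ++ s.map π ∨ s.map π = pre ++ t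

theorem finite_support_mul {π ρ : Equiv.Perm Atom} (h : {x | π x ≠ x}.Finite)
    (h' : {x | ρ x ≠ x}.Finite) : {x | (π * ρ) x ≠ x}.Finite := by
  refine (h.union h').subset fun x hx => ?_
  simp only [Set.mem_ofPred_eq, Equiv.Perm.mul_apply, Set.mem_union] at hx ⊢
  grind

theorem finite_support_swap (a b : Atom) : {x | Equiv.swap a b x ≠ x}.Finite := by
  refine (Set.toFinite {a, b}).subset fun x hx => ?_
  simp only [Set.mem_ofPred_eq, Equiv.swap_apply_def] at hx
  simp only [Set.mem_insert_iff, Set.mem_singleton_iff]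
  grind

theorem finite_support_inv {π : Equiv.Perm Atom} (h : {x | π x ≠ x}.Finite) :
    {x | π⁻¹ x ≠ x}.Finite := by
  refine h.subset fun x hx => ?_
  simp only [Set.mem_ofPred_eq] at hx ⊢
  intro h
  apply hx
  rw [Equiv.Perm.inv_eq_iff_eq]
  exact h.symm

theorem StateRel.symm {π : Equiv.Perm Atom} {s t : List Atom} (h : StateRel π s t) :
    StateRel π⁻¹ t s := by
  obtain ⟨hs, ht, hπ, pre, h⟩ := h
  refine ⟨ht, hs, finite_support_inv hπ, pre.map (⇑π⁻¹), ?_⟩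
  have key : (s.map π).map (⇑π⁻¹) = s := by simp [Function.comp_def]
  rcases h with h | h
  · right
    rw [h, List.map_append, key]
  · left
    rw [← key, h, List.map_append]

/-- Related states can be extended by arbitrary new atoms after adjusting the permutation, without
changing it on the old state. -/
theorem StateRel.extend {π : Equiv.Perm Atom} {s t : List Atom} (h : StateRel π s t)
    {a : Atom} (ha : a ∉ s) :
    ∃ (b : Atom) (π' : Equiv.Perm Atom), b ∉ t ∧ π' a = b ∧ (∀ x ∈ s, π' x = π x) ∧
      StateRel π' (s ++ [a]) (t ++ [b]) := by
  obtain ⟨hs, ht, hπ, pre, h⟩ := h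
  obtain ⟨b, hb⟩ := Infinite.exists_notMem_finset (t.toFinset ∪ (s.map π).toFinset)
  simp only [Finset.mem_union, List.mem_toFinset, not_or] at hb
  obtain ⟨hbt, hbs⟩ := hb
  have hx : ∀ x ∈ s, (Equiv.swap (π a) b * π) x = π x := by
    intro x hx
    rw [Equiv.Perm.mul_apply]
    apply Equiv.swap_apply_of_ne_of_ne
    · intro h
      exact ha (π.injective h ▸ hx)
    · rintro rfl
      exact hbs (List.mem_map_of_mem hx)
  have hm : (s ++ [a]).map (Equiv.swap (π a) b * π) = s.map π ++ [b] := by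
    rw [List.map_append, List.map_congr_left hx]
    simp
  refine ⟨b, Equiv.swap (π a) b * π, hbt, by simp, hx, ?_, ?_,
    finite_support_mul (finite_support_swap _ _) hπ, pre, ?_⟩
  · simpa [List.nodup_append] using ⟨hs, fun x hx h => ha (h ▸ hx)⟩
  · simpa [List.nodup_append] using ⟨ht, fun x hx h => hbt (h ▸ hx)⟩
  · rw [hm]
    rcases h with h | h
    · left
      rw [h, List.append_assoc]
    · right
      rw [h, List.append_assoc]

theorem obsVal_append (haff : ∀ o : σ.O, AffineObs σ o) (o : σ.O) (pre s as : List Atom)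
    (hn : (pre ++ s).Nodup) (hl : as.length = σ.arity o) (has : ∀ a ∈ as, a ∈ s) :
    σ.obsVal o (pre ++ s) as = σ.obsVal o s as := by
  induction pre with
  | nil => rfl
  | cons c pre ih =>
    rw [List.cons_append, List.nodup_cons] at hn
    rw [List.cons_append, haff o _ _ _ hn.2 hn.1 hl fun a ha => List.mem_append_right _ (has a ha),
      ih hn.2]

theorem obsVal_rel (hequiv : ObsEquivariant σ) (haff : ∀ o : σ.O, AffineObs σ o)
    {π : Equiv.Perm Atom} {s t : List Atom} (h : StateRel π s t) (o : σ.O) (as : List Atom)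
    (hl : as.length = σ.arity o) (has : ∀ a ∈ as, a ∈ s ∧ π a ∈ t) :
    σ.obsVal o s as = σ.obsVal o t (as.map π) := by
  obtain ⟨hs, ht, hπ, pre, h⟩ := h
  rw [hequiv π hπ o s as hs hl fun a ha => (has a ha).1]
  have hmem : ∀ a ∈ as.map π, a ∈ s.map π ∧ a ∈ t := by
    intro a ha
    obtain ⟨x, hx, rfl⟩ := List.mem_map.1 ha
    exact ⟨List.mem_map_of_mem (has x hx).1, (has x hx).2⟩
  rcases h with h | h
  · rw [h] at ht ⊢
    exact (obsVal_append haff o pre _ _ ht (by simpa using hl) fun a ha => (hmem a ha).1).symm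
  · have hn : (s.map π).Nodup := hs.map π.injective
    rw [h] at hn ⊢
    exact obsVal_append haff o pre _ _ hn (by simpa using hl) fun a ha => (hmem a ha).2

/-- Every atom of `A` lies in `s`, and its image under `π` lies in `t`. -/
def Cov (π : Equiv.Perm Atom) (s t : List Atom) (A : Finset Atom) : Prop :=
  ∀ x ∈ A, x ∈ s ∧ π x ∈ t

theorem Cov.mono {π : Equiv.Perm Atom} {s t : List Atom} {A B : Finset Atom} (h : Cov π s t A)
    (hB : B ⊆ A) : Cov π s t B := fun x hx => h x (hB hx)

/-- One machine step is matched from any related state. Affineness and equivariance of the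
observations are used at `obs`; the two allocation steps use `StateRel.extend`. -/
theorem step_sim (hequiv : ObsEquivariant σ) (haff : ∀ o : σ.O, AffineObs σ o)
    {c c' : Config σ} (h : Step σ c c') (t : List Atom) (π : Equiv.Perm Atom)
    (hr : StateRel π c.st t) (hc : Cov π c.st t (c.stk.atoms ∪ c.tm.atoms)) :
    ∃ (t' : List Atom) (π' : Equiv.Perm Atom), Step σ ⟨t, c.stk.mapAtoms π, c.tm.mapAtoms π⟩
        ⟨t', c'.stk.mapAtoms π', c'.tm.mapAtoms π'⟩ ∧
      StateRel π' c'.st t' ∧ Cov π' c'.st t' (c'.stk.atoms ∪ c'.tm.atoms) := by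
  cases h with
  | @pop v s S e hv =>
    refine ⟨t, π, ?_, hr, hc.mono ?_⟩
    · dsimp only
      rw [Tm.mapAtoms_subst1]
      exact .pop (hv.mapAtoms _)
    · have := Tm.atoms_subst1 e v
      simp only [Stk.atoms]
      grind
  | lett =>
    refine ⟨t, π, .lett, hr, hc.mono ?_⟩
    simp only [Stk.atoms, Tm.atoms]
    grind
  | @case v s S c br hv =>
    refine ⟨t, π, ?_, hr, hc.mono ?_⟩
    · dsimp only
      rw [Tm.mapAtoms_subst1]
      exact .case _ (hv.mapAtoms _)
    · have := Tm.atoms_subst1 (br c) v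
      have h2 : (br c).atoms ⊆ Finset.univ.biUnion fun c => (br c).atoms :=
        Finset.subset_biUnion_of_mem (fun c => (br c).atoms) (Finset.mem_univ c)
      simp only [Tm.atoms]
      grind
  | fst h1 h2 =>
    refine ⟨t, π, .fst (h1.mapAtoms _) (h2.mapAtoms _), hr, hc.mono ?_⟩
    simp only [Tm.atoms]
    grind
  | snd h1 h2 =>
    refine ⟨t, π, .snd (h1.mapAtoms _) (h2.mapAtoms _), hr, hc.mono ?_⟩
    simp only [Tm.atoms]
    grind
  | @app v s S e hv =>
    refine ⟨t, π, ?_, hr, hc.mono ?_⟩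
    · dsimp only
      rw [Tm.mapAtoms_subst2]
      exact .app (hv.mapAtoms _)
    · have := Tm.atoms_subst2 e v (.fn e)
      simp only [Tm.atoms] at this ⊢
      grind
  | @fresh s a S ha =>
    obtain ⟨b, π', hb, hab, hx, hr'⟩ := hr.extend ha
    refine ⟨t ++ [b], π', ?_, hr', ?_⟩
    · dsimp only [Tm.mapAtoms]
      rw [hab, Stk.mapAtoms_congr S (g := π') fun x hxS =>
        (hx x (hc x (Finset.mem_union_left _ hxS)).1).symm]
      exact .fresh hb
    · intro x hxA
      simp only [Tm.atoms, Finset.mem_union, Finset.mem_singleton] at hxA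
      rcases hxA with hxS | rfl
      · have := hc x (Finset.mem_union_left _ hxS)
        simp only [List.mem_append]
        rw [hx x this.1]
        exact ⟨.inl this.1, .inl this.2⟩
      · simp [hab]
  | @unbind s a' v S a ha hv =>
    obtain ⟨b, π', hb, hab, hx, hr'⟩ := hr.extend ha
    have hcv : ∀ x ∈ v.atoms, x ∈ s ∧ π x ∈ t := fun x hxv =>
      hc x (by simp [Tm.atoms, hxv])
    have hca : a ∈ s ∧ π a ∈ t := hc a (by simp [Tm.atoms])
    refine ⟨t ++ [b], π', ?_, hr', ?_⟩
    · dsimp only [Tm.mapAtoms]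
      rw [hab, Stk.mapAtoms_congr S (g := π') fun x hxS =>
        (hx x (hc x (Finset.mem_union_left _ hxS)).1).symm]
      have : (v.renameAtom a a').mapAtoms π' = (v.mapAtoms π).renameAtom (π a) b := by
        rw [Tm.renameAtom, Tm.renameAtom, Tm.mapAtoms_mapAtoms, Tm.mapAtoms_mapAtoms]
        refine Tm.mapAtoms_congr _ fun x hxv => ?_
        simp only [Function.comp_apply, π.injective.eq_iff]
        split
        · exact hab
        · exact hx x (hcv x hxv).1
      rw [this]
      exact .unbind hb (hv.mapAtoms _)
    · have hsub := Tm.atoms_renameAtom v a a'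
      intro x hxA
      have hxA' : x = a' ∨ (x ∈ s ∧ π x ∈ t) := by
        simp only [Tm.atoms, Finset.mem_union, Finset.mem_singleton] at hxA
        rcases hxA with hxS | rfl | hxv
        · exact .inr (hc x (Finset.mem_union_left _ hxS))
        · exact .inl rfl
        · rcases Finset.mem_insert.1 (hsub hxv) with rfl | hxv
          · exact .inl rfl
          · exact .inr (hcv x hxv)
      simp only [List.mem_append, List.mem_singleton]
      rcases hxA' with rfl | h
      · simp [hab]
      · rw [hx x h.1]
        exact ⟨.inl h.1, .inl h.2⟩
  | @obs s S o as has =>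
    have hca : ∀ i, as i ∈ s ∧ π (as i) ∈ t := fun i => hc _ (by
      simp only [Tm.atoms, Finset.mem_union, Finset.mem_biUnion, Finset.mem_univ, true_and,
        Finset.mem_singleton]
      exact .inr ⟨i, rfl⟩)
    refine ⟨t, π, ?_, hr, hc.mono ?_⟩
    · dsimp only [Tm.mapAtoms]
      rw [mapAtoms_numeral, obsVal_rel hequiv haff hr o _ (by simp) (by
        intro a ha
        obtain ⟨i, rfl⟩ := (List.mem_ofFn' _ _).1 ha
        exact hca i), List.map_ofFn]
      exact .obs o _ fun i => (hca i).2
    · simp only [atoms_numeral]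
      grind

theorem termN_sim (hequiv : ObsEquivariant σ) (haff : ∀ o : σ.O, AffineObs σ o)
    {c : Config σ} {n : ℕ} (h : TermN σ c n) (t : List Atom) (π : Equiv.Perm Atom)
    (hr : StateRel π c.st t) (hc : Cov π c.st t (c.stk.atoms ∪ c.tm.atoms)) :
    TermN σ ⟨t, c.stk.mapAtoms π, c.tm.mapAtoms π⟩ n := by
  induction h generalizing t π with
  | val hv => exact .val (hv.mapAtoms _)
  | step h _ ih =>
    obtain ⟨t', π', hstep, hr', hc'⟩ := step_sim hequiv haff h t π hr hc
    exact .step hstep (ih _ _ hr' hc')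

/-- Termination is invariant under permuting atoms and under adding or removing unused atoms at the
left end of the state. -/
theorem term_rel (hequiv : ObsEquivariant σ) (haff : ∀ o : σ.O, AffineObs σ o)
    {s t : List Atom} {S : Stk σ} {e : Tm σ} (π : Equiv.Perm Atom)
    (hr : StateRel π s t) (hc : Cov π s t (S.atoms ∪ e.atoms)) :
    Term σ ⟨s, S, e⟩ ↔ Term σ ⟨t, S.mapAtoms π, e.mapAtoms π⟩ := by
  constructor
  · rintro ⟨n, h⟩
    exact ⟨n, termN_sim hequiv haff h t π hr hc⟩
  · rintro ⟨n, h⟩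
    refine ⟨n, ?_⟩
    have hid : (⇑π⁻¹ ∘ ⇑π) = fun x => x := by
      funext x
      simp
    have := termN_sim hequiv haff h s π⁻¹ hr.symm (by
      simp only [Stk.atoms_mapAtoms, Tm.atoms_mapAtoms, ← Finset.image_union]
      intro x hx
      obtain ⟨y, hy, rfl⟩ := Finset.mem_image.1 hx
      have := hc y hy
      simpa using ⟨this.2, this.1⟩)
    simpa only [Stk.mapAtoms_mapAtoms, Tm.mapAtoms_mapAtoms, hid, Stk.mapAtoms_id,
      Tm.mapAtoms_id] using this

end Machine

/-! ### Equivalence at a fixed state -/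

section FixedState

variable {σ : Sig}

/-- `u₁` and `u₂` are indistinguishable at type `τ` by closed frame stacks run in the state `s`. -/
def EqAt (σ : Sig) (s : List Atom) (u₁ u₂ : Tm σ) (τ : Ty σ.D) : Prop :=
  ∀ (S : Stk σ) (τ' : Ty σ.D), S.atoms ⊆ s.toFinset → HasTyStk σ [] S τ τ' →
    (Term σ ⟨s, S, u₁⟩ ↔ Term σ ⟨s, S, u₂⟩)

/-- Wrapping both sides in an atom-binding is an instance of testing with one more frame. -/
theorem EqAt.bindv {s : List Atom} {u u' : Tm σ} {τ : Ty σ.D} (h : EqAt σ s u u' τ)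
    (hu : IsVal u) (hu' : IsVal u') {c : Atom} (hcs : c ∈ s) :
    EqAt σ s (.bindv (.atom c) u) (.bindv (.atom c) u') (.bnd τ) := by
  intro S τ' hS ht
  have := h (.cons S (.bindv (.atom c) (.var 0))) τ'
    (by
      simp only [Stk.atoms, Tm.atoms]
      intro x hx
      simp only [Finset.mem_union, Finset.mem_singleton, Finset.notMem_empty, or_false] at hx
      rcases hx with hx | rfl
      · exact hS hx
      · simpa using hcs)
    (.cons (.bindv .atom .var .atom (.var _ _ _ rfl)) ht)
  rwa [term_pop hu, term_pop hu'] at this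

/-- The context `let p = unbind x in let y = fst p in let z = snd p in S[z]`, with `y` in place of
the atom `a` in `S`. -/
def unbindCtx (S : Stk σ) (a : Atom) : Tm σ :=
  .lett (.unbind (.var 0)) (.lett (.fst (.var 0)) (.lett (.snd (.var 1))
    (((plug S (.var 0)).abs a 1).renV (upr (upr (· + 2))))))

theorem atoms_unbindCtx (S : Stk σ) (a : Atom) : (unbindCtx S a).atoms ⊆ S.atoms.erase a := by
  have := Tm.atoms_abs a (plug S (.var 0)) 1
  rw [atoms_plug] at this
  simpa [unbindCtx, Tm.atoms, Tm.atoms_renV] using this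

theorem hasTy_unbindCtx {S : Stk σ} {τ τ' : Ty σ.D} (a : Atom) (h : HasTyStk σ [] S τ τ') :
    HasTy σ [.bnd τ] (unbindCtx S a) τ' := by
  refine .lett (.unbind .var (.var _ _ _ rfl)) (.lett (.fst .var (.var _ _ _ rfl))
    (.lett (.snd .var (.var _ _ _ rfl)) ?_))
  have h1 : HasTy σ [τ] (plug S (.var 0)) τ' := HasTy.plug h (.var _ _ _ rfl)
  have h2 : HasTy σ [τ, .atm] ((plug S (.var 0)).abs a 1) τ' := h1.abs a [τ] [] rfl
  refine h2.renV _ _ ?_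
  rintro (_ | _ | n) τ₁ hn
  · simpa [upr] using hn
  · simpa [upr] using hn
  · simp at hn

/-- Running `unbindCtx`: the value is unbound with a new atom `b`, and control reaches `S` with `b`
in place of `a`. -/
theorem term_unbindCtx {s : List Atom} {S : Stk σ} {v : Tm σ} (hv : IsVal v) (a c : Atom) :
    Term σ ⟨s, .cons .id (unbindCtx S a), .bindv (.atom c) v⟩ ↔
      ∃ b ∉ s, Term σ ⟨s ++ [b], S.mapAtoms (fun x => if x = a then b else x),
        v.renameAtom c b⟩ := by
  rw [term_pop (.bindv .atom hv)]
  simp only [unbindCtx, Tm.subst1, Tm.subst]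
  rw [renV_subst _ _ (upr (upr (· + 1))) _ (by rintro (_ | _ | n) <;> rfl), term_lett]
  simp only [Tm.cons1]
  rw [term_unbind hv]
  refine exists_congr fun b => and_congr_right fun _ => ?_
  have hvb : IsVal (v.renameAtom c b) := hv.mapAtoms _
  rw [term_pop (.pair .atom hvb)]
  simp only [Tm.subst1, Tm.subst]
  rw [renV_subst _ _ (fun n => n) _ (by rintro (_ | _ | n) <;> rfl), renV_id, term_lett]
  simp only [Tm.cons1, Tm.ups, Tm.subst, Tm.renV]
  rw [term_fst .atom hvb, term_pop .atom]
  simp only [Tm.subst1, Tm.subst]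
  rw [abs_subst _ a b 1 _ (SubstAt.ups ⟨by simp, rfl, fun _ _ => rfl⟩), term_lett]
  rw [renV_subst _ Nat.succ (fun n => n) (Tm.cons1 _) (fun _ => rfl), renV_id]
  rw [term_snd .atom hvb, term_pop hvb, Tm.renameAtom, plug_mapAtoms, plug_subst1, term_fill]
  rfl

/-- Unbinding both sides with the same new atom preserves indistinguishability. -/
theorem EqAt.unbind (hequiv : ObsEquivariant σ) (haff : ∀ o : σ.O, AffineObs σ o)
    {s : List Atom} {v v' : Tm σ} {τ : Ty σ.D} {c c' a : Atom}
    (h : EqAt σ s (.bindv (.atom c) v) (.bindv (.atom c') v') (.bnd τ))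
    (hs : s.Nodup) (hv : IsVal v) (hv' : IsVal v') (hvs : v.atoms ⊆ s.toFinset)
    (hvs' : v'.atoms ⊆ s.toFinset) (ha : a ∉ s) :
    EqAt σ (s ++ [a]) (v.renameAtom c a) (v'.renameAtom c' a) τ := by
  intro S τ' hS ht
  have key : ∀ (u : Tm σ) (d : Atom), IsVal u → u.atoms ⊆ s.toFinset →
      (Term σ ⟨s, .cons .id (unbindCtx S a), .bindv (.atom d) u⟩ ↔
        Term σ ⟨s ++ [a], S, u.renameAtom d a⟩) := by
    intro u d hu hus
    rw [term_unbindCtx hu]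
    -- By equivariance the choice of the new atom is irrelevant: swap it with `a`.
    have hswap : ∀ b ∉ s, (Term σ ⟨s ++ [a], S, u.renameAtom d a⟩ ↔
        Term σ ⟨s ++ [b], S.mapAtoms (fun x => if x = a then b else x), u.renameAtom d b⟩) := by
      intro b hb
      have hfix : ∀ x ∈ s, Equiv.swap a b x = x := fun x hx =>
        Equiv.swap_apply_of_ne_of_ne (fun h => ha (h ▸ hx)) (fun h => hb (h ▸ hx))
      have hmap : (s ++ [a]).map (Equiv.swap a b) = s ++ [b] := by
        rw [List.map_append, List.map_congr_left hfix]
        simp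
      have hcov : ∀ x ∈ s ++ [a], x ∈ s ++ [a] ∧ Equiv.swap a b x ∈ s ++ [b] := fun x hx =>
        ⟨hx, hmap ▸ List.mem_map_of_mem hx⟩
      rw [term_rel hequiv haff (t := s ++ [b]) (Equiv.swap a b)
        ⟨by simpa [List.nodup_append] using ⟨hs, fun x hx h => ha (h ▸ hx)⟩,
          by simpa [List.nodup_append] using ⟨hs, fun x hx h => hb (h ▸ hx)⟩,
          finite_support_swap _ _, [], .inl hmap.symm⟩ ?_]
      · have h1 : S.mapAtoms (Equiv.swap a b) = S.mapAtoms (fun x => if x = a then b else x) := by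
          refine Stk.mapAtoms_congr S fun x hx => ?_
          have hx := hS hx
          simp only [List.mem_toFinset, List.mem_append, List.mem_singleton] at hx
          rcases hx with hx | rfl
          · rw [hfix x hx, if_neg (by rintro rfl; exact ha hx)]
          · simp
        have h2 : (u.renameAtom d a).mapAtoms (Equiv.swap a b) = u.renameAtom d b := by
          rw [Tm.renameAtom, Tm.mapAtoms_mapAtoms, Tm.renameAtom]
          refine Tm.mapAtoms_congr _ fun x hx => ?_
          simp only [Function.comp_apply]
          split
          · simp
          · exact hfix x (by simpa using hus hx)
        rw [h1, h2]
      · intro x hx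
        refine hcov x ?_
        rcases Finset.mem_union.1 hx with hx | hx
        · exact List.mem_toFinset.1 (hS hx)
        · rcases Finset.mem_insert.1 (Tm.atoms_renameAtom _ _ _ hx) with rfl | hx
          · simp
          · have := hus hx
            simp only [List.mem_toFinset] at this
            simp [this]
    constructor
    · rintro ⟨b, hb, h⟩
      exact (hswap b hb).2 h
    · intro h
      exact ⟨a, ha, (hswap a ha).1 h⟩
  rw [← key v c hv hvs, ← key v' c' hv' hvs']
  refine h _ _ ?_ (.cons (hasTy_unbindCtx a ht) .id)
  intro x hx
  simp only [Stk.atoms, Finset.empty_union] at hx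
  have hx := Finset.mem_erase.1 (atoms_unbindCtx S a hx)
  have := hS hx.2
  simp only [List.mem_toFinset, List.mem_append, List.mem_singleton] at this ⊢
  tauto

/-- The oldest atom of the state may be made the youngest: refresh it by binding and unbinding it,
then drop the unused original by affineness and call the new atom by the old name. -/
theorem EqAt.rotate (hequiv : ObsEquivariant σ) (haff : ∀ o : σ.O, AffineObs σ o)
    {s : List Atom} {c : Atom} {u u' : Tm σ} {τ : Ty σ.D} (h : EqAt σ (c :: s) u u' τ)
    (hs : (c :: s).Nodup) (hu : IsVal u) (hu' : IsVal u')
    (hus : u.atoms ⊆ (c :: s).toFinset) (hus' : u'.atoms ⊆ (c :: s).toFinset) :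
    EqAt σ (s ++ [c]) u u' τ := by
  obtain ⟨b, hb⟩ := Infinite.exists_notMem_finset (c :: s).toFinset
  rw [List.mem_toFinset] at hb
  have hub := (h.bindv hu hu' (c := c) (by simp)).unbind hequiv haff hs hu hu' hus hus' hb
  rw [Tm.renameAtom_eq_swap _ _ _ fun h => hb (List.mem_toFinset.1 (hus h)),
    Tm.renameAtom_eq_swap _ _ _ fun h => hb (List.mem_toFinset.1 (hus' h))] at hub
  have hbc : b ≠ c ∧ b ∉ s := by simpa using hb
  have hcs := List.nodup_cons.1 hs
  have hmap : (s ++ [c]).map (Equiv.swap c b) = s ++ [b] := by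
    have hfix : ∀ x ∈ s, Equiv.swap c b x = x := fun x hx =>
      Equiv.swap_apply_of_ne_of_ne (fun h => hcs.1 (h ▸ hx)) (fun h => hbc.2 (h ▸ hx))
    rw [List.map_append, List.map_congr_left hfix]
    simp
  have hrel : StateRel (Equiv.swap c b) (s ++ [c]) (c :: s ++ [b]) :=
    ⟨by simpa [List.nodup_append] using ⟨hcs.2, fun x hx h => hcs.1 (h ▸ hx)⟩,
      List.nodup_append.2 ⟨hs, by simp, by
        intro x hx y hy hxy
        rw [List.mem_singleton] at hy
        exact hb (hy ▸ hxy ▸ hx)⟩,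
      finite_support_swap _ _, [c], .inl (by rw [hmap]; rfl)⟩
  have hcov : ∀ A ⊆ (s ++ [c]).toFinset, Cov (Equiv.swap c b) (s ++ [c]) (c :: s ++ [b]) A := by
    intro A hA x hx
    have hx := List.mem_toFinset.1 (hA hx)
    refine ⟨hx, ?_⟩
    have := List.mem_map_of_mem (f := Equiv.swap c b) hx
    rw [hmap] at this
    exact List.mem_cons_of_mem c this
  have hperm : (c :: s).toFinset = (s ++ [c]).toFinset := by
    ext x
    simp
  rw [hperm] at hus hus'
  intro S τ' hS ht
  rw [term_rel hequiv haff _ hrel (hcov _ (Finset.union_subset hS hus)),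
    term_rel hequiv haff _ hrel (hcov _ (Finset.union_subset hS hus'))]
  refine hub _ τ' ?_ (ht.mapAtoms _)
  rw [Stk.atoms_mapAtoms]
  intro x hx
  obtain ⟨y, hy, rfl⟩ := Finset.mem_image.1 hx
  exact List.mem_toFinset.2 (hcov _ hS y hy).2

theorem EqAt.rotate_append (hequiv : ObsEquivariant σ) (haff : ∀ o : σ.O, AffineObs σ o)
    (l s : List Atom) {u u' : Tm σ} {τ : Ty σ.D} (h : EqAt σ (l ++ s) u u' τ)
    (hs : (l ++ s).Nodup) (hu : IsVal u) (hu' : IsVal u')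
    (hus : u.atoms ⊆ (l ++ s).toFinset) (hus' : u'.atoms ⊆ (l ++ s).toFinset) :
    EqAt σ (s ++ l) u u' τ := by
  induction l generalizing s with
  | nil => simpa using h
  | cons c l ih =>
    have hperm : (l ++ (s ++ [c])).Perm (c :: l ++ s) := by
      rw [← List.append_assoc]
      exact (List.perm_append_singleton c (l ++ s))
    have hfs : (l ++ (s ++ [c])).toFinset = (c :: l ++ s).toFinset :=
      List.toFinset_eq_of_perm _ _ hperm
    have h' : EqAt σ (l ++ (s ++ [c])) u u' τ := by
      rw [← List.append_assoc]
      exact EqAt.rotate hequiv haff h hs hu hu' hus hus'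
    simpa using ih (s ++ [c]) h' (hperm.nodup_iff.2 hs) (hfs ▸ hus) (hfs ▸ hus')

end FixedState

/-! ### Extensionality for atom-binding -/

/-- Proposition: extensionality for atom-binding, converse, affine observations. -/
theorem ext_bind_2 (σ : Sig) (hequiv : ObsEquivariant σ)
    (haff : ∀ o : σ.O, AffineObs σ o)
    (τ : Ty σ.D) (w : Finset Atom) (a a' : Atom) (v v' : Tm σ)
    (hv : IsVal v) (hv' : IsVal v')
    (hw : insert a (insert a' (v.atoms ∪ v'.atoms)) ⊆ w)
    (ht : HasTy σ [] (Tm.bindv (Tm.atom a) v) (Ty.bnd τ))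
    (ht' : HasTy σ [] (Tm.bindv (Tm.atom a') v') (Ty.bnd τ))
    (a'' : Atom) (ha'' : a'' ∉ w)
    (h : OpEq σ w (Tm.bindv (Tm.atom a) v) (Tm.bindv (Tm.atom a') v') (Ty.bnd τ)) :
    OpEq σ (insert a'' w) (v.renameAtom a a'') (v'.renameAtom a' a'') τ := by
  have hsub : ∀ x, x = a ∨ x = a' ∨ x ∈ v.atoms ∨ x ∈ v'.atoms → x ∈ w := fun x hx => hw (by
    simpa only [Finset.mem_insert, Finset.mem_union] using hx)
  have hty : HasTy σ [] v τ := by cases ht; assumption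
  have hty' : HasTy σ [] v' τ := by cases ht'; assumption
  have hat : (v.renameAtom a a'').atoms ⊆ insert a'' w :=
    (Tm.atoms_renameAtom _ _ _).trans (Finset.insert_subset_insert _ fun x hx => hsub x (by tauto))
  have hat' : (v'.renameAtom a' a'').atoms ⊆ insert a'' w :=
    (Tm.atoms_renameAtom _ _ _).trans (Finset.insert_subset_insert _ fun x hx => hsub x (by tauto))
  refine ⟨Finset.union_subset hat hat', hty.mapAtoms _, hty'.mapAtoms _, ?_⟩
  intro s S τ' hs hws hS
  have hws' := Finset.union_subset_iff.1 hws
  obtain ⟨s₁, s₂, rfl⟩ : ∃ s₁ s₂, s = s₁ ++ a'' :: s₂ :=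
    List.append_of_mem (List.mem_toFinset.1 (hws'.1 (Finset.mem_insert_self _ _)))
  -- Test the bindings in the state `s₂ ++ s₁`, where unbinding creates `a''` right after `s₁`;
  -- rotating `s₂` to the end gives the required state.
  have hperm : (s₂ ++ (s₁ ++ [a''])).Perm (s₁ ++ a'' :: s₂) := by
    refine List.perm_append_comm.trans ?_
    simp
  have hnd : (s₂ ++ s₁ ++ [a'']).Nodup := by
    rw [List.append_assoc]
    exact hperm.nodup_iff.2 hs
  have hfs : (s₂ ++ (s₁ ++ [a''])).toFinset = (s₁ ++ a'' :: s₂).toFinset :=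
    List.toFinset_eq_of_perm _ _ hperm
  have hnot : a'' ∉ s₂ ++ s₁ := fun hmem =>
    (List.nodup_append.1 hnd).2.2 _ hmem _ (List.mem_singleton_self _) rfl
  have hw₀ : w ⊆ (s₂ ++ s₁).toFinset := by
    intro x hx
    have h1 := hws'.1 (Finset.mem_insert_of_mem hx)
    have h2 : x ≠ a'' := fun h => ha'' (h ▸ hx)
    simp only [List.mem_toFinset, List.mem_append, List.mem_cons] at h1 ⊢
    tauto
  have h0 : EqAt σ (s₂ ++ s₁) (.bindv (.atom a) v) (.bindv (.atom a') v') (.bnd τ) :=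
    fun S τ' hS ht => h.2.2.2 _ S τ' (List.nodup_append.1 hnd).1 (Finset.union_subset hw₀ hS) ht
  have h1 := h0.unbind hequiv haff (List.nodup_append.1 hnd).1 hv hv'
    (fun x hx => hw₀ (hsub x (by tauto))) (fun x hx => hw₀ (hsub x (by tauto))) hnot
  rw [List.append_assoc] at h1
  have h2 := EqAt.rotate_append hequiv haff s₂ (s₁ ++ [a'']) h1 (hperm.nodup_iff.2 hs)
    (hv.mapAtoms _) (hv'.mapAtoms _) (hfs ▸ hat.trans hws'.1) (hfs ▸ hat'.trans hws'.1)
  rw [List.append_assoc] at h2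
  exact h2 S τ' hws'.2 hS
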